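/- For $d\in\mathbb N$ identify functions $f\colon[0,1]^d\to\mathbb C$ with $1$-periodic functions on $\mathbb R^d$, put $\hat f(k)=\int_{[0,1]^d} f(x)e^{-2\pi i\langle k,x\rangle}\,dx$ for $k\in\mathbb Z^d$, and let $$F_d^{\log}:=\Big\{f\in C([0,1]^d)\ \Big|\ \sum_{k\in\mathbb Z^d}|\hat f(k)|\max(1,\log\|k\|_\infty)\le 1\Big\},$$ where the functions are continuous as $1$-periodic functions and the weight of $k=0$ is $1$. A linear algorithm of rank at most $n$ is a $\mathbb C$-linear map $A_n\colon V\to L_2([0,1]^d)$ whose image has dimension at most $n$, where $V$ is any complex linear space of functions containing $F_d^{\log}$ (for example, the Wiener algebra of $1$-periodic functions with absolutely convergent Fourier series); its worst-case error is $\mathrm{err}(A_n):=\sup_{f\in F_d^{\log}}\|f-A_nf\|_{L_2}$. The problem of $L_2$-approximation on the classes $F_d^{\log}$ with linear algorithms suffers from the curse of dimensionality. That is, if $n(\varepsilon,d)$ denotes the least $n$ for which some linear algorithm of rank at most $n$ satisfies $\mathrm{err}(A_n)\le\varepsilon$ (and $n(\varepsilon,d)=\infty$ if there is none), then there are $C,\gamma,\varepsilon>0$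 such that $n(\varepsilon,d)\ge C(1+\gamma)^d$ for all $d\in\mathbb N$. Moreover, for every $d\in\mathbb N$ and every linear algorithm $A_n$ of rank at most $n$, where $n\le 5^d/2$, $$\sup_{f\in F_d^{\log}}\|f-A_nf\|_{L_2}\ \ge\ \frac1{\sqrt2}.$$ -/

import Mathlib

open MeasureTheory
open scoped ENNReal

noncomputable section

/-- The unit cube `[0,1]^d`. -/
def cube (d : ℕ) : Set (Fin d → ℝ) := Set.univ.pi fun _ => Set.Icc 0 1

/-- Lebesgue measure on the unit cube `[0,1]^d`. -/
def cubeMeasure (d : ℕ) : Measure (Fin d → ℝ) := volume.restrict (cube d)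

/-- The complex Hilbert space `L₂([0,1]^d)`. -/
abbrev L2Cube (d : ℕ) : Type := Lp ℂ 2 (cubeMeasure d)

/-- The Fourier coefficient `f̂(k) = ∫_{[0,1]^d} f(x) e^{-2πi⟨k,x⟩} dx`. -/
def fCoeff (d : ℕ) (f : (Fin d → ℝ) → ℂ) (k : Fin d → ℤ) : ℂ :=
  ∫ x, f x * Complex.exp (-(2 * Real.pi * Complex.I) * ∑ i, (k i : ℂ) * (x i : ℂ)) ∂(cubeMeasure d)

/-- `f` is 1-periodic in each coordinate. -/
def Periodic1 (d : ℕ) (f : (Fin d → ℝ) → ℂ) : Prop :=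
  ∀ (x : Fin d → ℝ) (i : Fin d), f (Function.update x i (x i + 1)) = f x

/-- The weight `max(1, log ‖k‖_∞)`. The norm on `Fin d → ℤ` is the maximum norm; for `k = 0` the
weight is `1`. -/
def logWeight (d : ℕ) (k : Fin d → ℤ) : ℝ :=
  max 1 (Real.log ‖k‖)

/-- The class `F_d^log` of continuous 1-periodic functions with
`∑_k |f̂(k)| max(1, log ‖k‖_∞) ≤ 1`. -/
def FdLog (d : ℕ) : Set ((Fin d → ℝ) → ℂ) :=
  {f | Continuous f ∧ Periodic1 d f ∧
    Summable (fun k : Fin d → ℤ => ‖fCoeff d f k‖ * logWeight d k) ∧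
    ∑' k : Fin d → ℤ, ‖fCoeff d f k‖ * logWeight d k ≤ 1}

/-- The worst-case error `sup_{f ∈ F_d^log} ‖f - A f‖_{L₂}` of a linear map `A` into `L₂([0,1]^d)`
that is defined on a linear space `V` of functions (used for `V` containing `F_d^log`). -/
def worstCaseError {d : ℕ} {V : Submodule ℂ ((Fin d → ℝ) → ℂ)} (A : V →ₗ[ℂ] L2Cube d) : ℝ≥0∞ :=
  ⨆ f : V, ⨆ _ : (f : (Fin d → ℝ) → ℂ) ∈ FdLog d,
    eLpNorm (fun x => (f : (Fin d → ℝ) → ℂ) x - A f x) 2 (cubeMeasure d)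

/-- The complexity of `L₂`-approximation on `F_d^log` with linear algorithms: the least `n` such
that some linear algorithm of rank at most `n` has worst-case error at most `ε`
(`⊤` if there is none). -/
def linComplexity (ε : ℝ) (d : ℕ) : ℕ∞ :=
  sInf {N : ℕ∞ | ∃ n : ℕ, N = n ∧
    ∃ (V : Submodule ℂ ((Fin d → ℝ) → ℂ)) (A : V →ₗ[ℂ] L2Cube d),
      FdLog d ⊆ V ∧ A.rank ≤ n ∧ worstCaseError A ≤ ENNReal.ofReal ε}

/-- The curse of dimensionality: for some `C, γ, ε > 0` the complexity `comp ε d` is at least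
`C (1+γ)^d` for all `d`. -/
def CurseOfDimensionality (comp : ℝ → ℕ → ℕ∞) : Prop :=
  ∃ C γ ε : ℝ, 0 < C ∧ 0 < γ ∧ 0 < ε ∧
    ∀ d : ℕ, ENNReal.ofReal (C * (1 + γ) ^ d) ≤ (comp ε d : ℝ≥0∞)

end

/-!
The maximum-norm ball `‖k‖ ≤ exp 1` contains the `5 ^ d` frequencies with all coordinates in
`{-2, …, 2}`. Each of them has weight `1`, so the corresponding trigonometric monomials lie in
`F_d^log`, and they are orthonormal in `L₂`. For the orthogonal projection `P` onto the range of an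
algorithm of rank at most `n`, the sum of `‖P e‖ ^ 2` over these monomials `e` is at most the trace
of `P`, hence at most `n`. Some monomial therefore satisfies `‖P e‖ ^ 2 ≤ n / 5 ^ d` and is
approximated with squared error at least `1 - n / 5 ^ d`.
-/

open UnitAddTorus

section Approximation

variable {𝕜 E ι : Type*} [RCLike 𝕜] [NormedAddCommGroup E] [InnerProductSpace 𝕜 E]

theorem norm_sq_sub_norm_sq_starProjection_le_norm_sub_sq (W : Submodule 𝕜 E)
    [W.HasOrthogonalProjection] (x : E) {y : E} (hy : y ∈ W) :
    ‖x‖ ^ 2 - ‖W.starProjection x‖ ^ 2 ≤ ‖x - y‖ ^ 2 := by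
  have pythagoras := W.norm_sq_eq_add_norm_sq_starProjection x
  have perp_sub : Wᗮ.starProjection (x - y) = Wᗮ.starProjection x := by
    rw [map_sub, (Submodule.starProjection_apply_eq_zero_iff Wᗮ).2
      (W.le_orthogonal_orthogonal hy), sub_zero]
  have perp_le : ‖Wᗮ.starProjection x‖ ≤ ‖x - y‖ :=
    perp_sub ▸ Wᗮ.norm_starProjection_apply_le (x - y)
  linarith [pow_le_pow_left₀ (norm_nonneg _) perp_le 2]

theorem norm_sq_starProjection_eq_sum (W : Submodule 𝕜 E) [W.HasOrthogonalProjection]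
    [Fintype ι] (b : OrthonormalBasis ι 𝕜 W) (x : E) :
    ‖W.starProjection x‖ ^ 2 = ∑ j, ‖inner 𝕜 x (b j : E)‖ ^ 2 := by
  rw [Submodule.starProjection_apply, ← Submodule.coe_norm, ← b.sum_sq_norm_inner_right]
  refine Finset.sum_congr rfl fun j _ => ?_
  rw [Submodule.inner_orthogonalProjectionOnto_eq_of_mem_left, norm_inner_symm]

variable {v : ι → E}

theorem sum_norm_sq_starProjection_le_finrank (hv : Orthonormal 𝕜 v) (s : Finset ι)
    (W : Submodule 𝕜 E) [FiniteDimensional 𝕜 W] :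
    ∑ i ∈ s, ‖W.starProjection (v i)‖ ^ 2 ≤ Module.finrank 𝕜 W := by
  let b := stdOrthonormalBasis 𝕜 W
  calc ∑ i ∈ s, ‖W.starProjection (v i)‖ ^ 2
      = ∑ j, ∑ i ∈ s, ‖inner 𝕜 (v i) (b j : E)‖ ^ 2 := by
        simp_rw [norm_sq_starProjection_eq_sum W b]
        exact Finset.sum_comm
    _ ≤ ∑ j, ‖(b j : E)‖ ^ 2 := Finset.sum_le_sum fun j _ => hv.sum_inner_products_le (b j : E)
    _ = Module.finrank 𝕜 W := by simp [← Submodule.coe_norm]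

theorem exists_one_sub_finrank_div_card_le_norm_sub_sq (hv : Orthonormal 𝕜 v) {s : Finset ι}
    (hs : s.Nonempty) (W : Submodule 𝕜 E) [FiniteDimensional 𝕜 W] :
    ∃ i ∈ s, ∀ y ∈ W, 1 - (Module.finrank 𝕜 W : ℝ) / s.card ≤ ‖v i - y‖ ^ 2 := by
  have hcard : (s.card : ℝ) ≠ 0 := Nat.cast_ne_zero.2 hs.card_ne_zero
  obtain ⟨i, hi, hle⟩ : ∃ i ∈ s,
      ‖W.starProjection (v i)‖ ^ 2 ≤ (Module.finrank 𝕜 W : ℝ) / s.card := by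
    refine Finset.exists_le_of_sum_le hs ?_
    rw [Finset.sum_const, nsmul_eq_mul, mul_div_cancel₀ _ hcard]
    exact sum_norm_sq_starProjection_le_finrank hv s W
  refine ⟨i, hi, fun y hy => ?_⟩
  have := norm_sq_sub_norm_sq_starProjection_le_norm_sub_sq W (v i) hy
  rw [hv.1 i] at this
  linarith

end Approximation

section Torus

variable {ι : Type*} {d : ℕ}

/-- The quotient map from `ℝ^ι` to the torus `ℝ^ι / ℤ^ι`, through which `1`-periodic functions
on `ℝ^ι` factor. -/
def torusMk (x : ι → ℝ) : UnitAddTorus ι := fun i => x i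

theorem continuous_torusMk : Continuous (torusMk (ι := ι)) :=
  continuous_pi fun i => (AddCircle.continuous_mk' 1).comp (continuous_apply i)

theorem periodic1_comp_torusMk (f : UnitAddTorus (Fin d) → ℂ) : Periodic1 d (f ∘ torusMk) := by
  intro x i
  refine congrArg f (funext fun j => ?_)
  rcases eq_or_ne j i with rfl | hj
  · simp [torusMk]
  · simp [torusMk, hj]

theorem cubeMeasure_eq_restrict_Ioc (d : ℕ) :
    cubeMeasure d = volume.restrict (Set.univ.pi fun _ => Set.Ioc 0 1) :=
  (Measure.restrict_congr_set Measure.pi_Ioc_ae_eq_pi_Icc).symm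

theorem measurePreserving_torusMk :
    MeasurePreserving torusMk (cubeMeasure d) (Measure.pi fun _ => AddCircle.haarAddCircle) := by
  have hmk : MeasurePreserving ((↑) : ℝ → UnitAddCircle) (volume.restrict (Set.Ioc 0 1))
      AddCircle.haarAddCircle := by
    simpa [AddCircle.volume_eq_smul_haarAddCircle] using UnitAddCircle.measurePreserving_mk 0
  rw [cubeMeasure_eq_restrict_Ioc, volume_pi, Measure.restrict_pi_pi]
  exact measurePreserving_pi _ _ fun _ => hmk

theorem mFourier_torusMk [Fintype ι] (k : ι → ℤ) (x : ι → ℝ) :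
    mFourier k (torusMk x) =
      Complex.exp (2 * Real.pi * Complex.I * ∑ i, (k i : ℂ) * (x i : ℂ)) := by
  simp only [mFourier, ContinuousMap.coe_mk, torusMk, fourier_coe_apply, Finset.mul_sum,
    Complex.exp_sum, Complex.ofReal_one, div_one, mul_assoc]

theorem fCoeff_comp_torusMk (f : UnitAddTorus (Fin d) → ℂ) (k : Fin d → ℤ) :
    fCoeff d (f ∘ torusMk) k = mFourierCoeff f k := by
  have hset : {x : Fin d → ℝ | ∀ i, x i ∈ Set.Ioc ((0 : Fin d → ℝ) i) ((0 : Fin d → ℝ) i + 1)} =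
      Set.univ.pi fun _ => Set.Ioc 0 1 := by
    ext; simp
  rw [mFourierCoeff_eq_integral f k 0, hset, ← cubeMeasure_eq_restrict_Ioc, fCoeff]
  refine integral_congr_ae (.of_forall fun x => ?_)
  change f (torusMk x) * _ = mFourier (-k) (torusMk x) * f (torusMk x)
  rw [mul_comm, mFourier_torusMk]
  simp

theorem comp_torusMk_mem_FdLog_iff (f : C(UnitAddTorus (Fin d), ℂ)) :
    f ∘ torusMk ∈ FdLog d ↔
      Summable (fun k => ‖mFourierCoeff f k‖ * logWeight d k) ∧
        ∑' k, ‖mFourierCoeff f k‖ * logWeight d k ≤ 1 := by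
  simp only [FdLog, Set.mem_ofPred_eq, fCoeff_comp_torusMk, periodic1_comp_torusMk,
    f.continuous.comp continuous_torusMk, true_and]

end Torus

section Monomials

variable {d : ℕ}

theorem mFourierCoeff_mFourier {ι : Type*} [Fintype ι] (k l : ι → ℤ) :
    mFourierCoeff (mFourier k) l = if l = k then 1 else 0 := by
  rw [← mFourierCoeff_toLp, ← mFourierBasis_repr, ← mFourierLp, ← coe_mFourierBasis,
    HilbertBasis.repr_self]
  simp [lp.single_apply, Pi.single_apply]

theorem mFourier_comp_torusMk_mem_FdLog {k : Fin d → ℤ} (hk : logWeight d k ≤ 1) :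
    mFourier k ∘ torusMk ∈ FdLog d := by
  have hsum : HasSum (fun l => ‖mFourierCoeff (mFourier k) l‖ * logWeight d l)
      (logWeight d k) := by
    convert hasSum_ite_eq k (logWeight d k) using 2 with l
    rw [mFourierCoeff_mFourier]
    split_ifs with hl <;> simp [hl]
  exact (comp_torusMk_mem_FdLog_iff _).2 ⟨hsum.summable, hsum.tsum_eq.trans_le hk⟩

/-- The trigonometric monomial `x ↦ e^{2πi⟨k,x⟩}` as an element of `L₂([0,1]^d)`. It is the
pullback of the monomial on the torus under an isometry, which makes orthonormality immediate. -/
noncomputable def monomialLp (k : Fin d → ℤ) : L2Cube d :=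
  Lp.compMeasurePreservingₗᵢ ℂ torusMk measurePreserving_torusMk (mFourierLp 2 k)

theorem orthonormal_monomialLp : Orthonormal ℂ (monomialLp (d := d)) :=
  orthonormal_mFourier.comp_linearIsometry _

theorem coeFn_monomialLp (k : Fin d → ℤ) :
    monomialLp k =ᵐ[cubeMeasure d] mFourier k ∘ torusMk :=
  (Lp.coeFn_compMeasurePreserving _ measurePreserving_torusMk).trans
    (measurePreserving_torusMk.quasiMeasurePreserving.ae_eq_comp (coeFn_mFourierLp 2 k))

end Monomials

section WorstCaseError

variable {d n : ℕ} {V : Submodule ℂ ((Fin d → ℝ) → ℂ)} (A : V →ₗ[ℂ] L2Cube d)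

theorem enorm_sub_le_worstCaseError {f : V} (hf : (f : (Fin d → ℝ) → ℂ) ∈ FdLog d)
    {g : L2Cube d} (hg : g =ᵐ[cubeMeasure d] f) : ‖g - A f‖ₑ ≤ worstCaseError A := by
  have henorm : ‖g - A f‖ₑ =
      eLpNorm (fun x => (f : (Fin d → ℝ) → ℂ) x - A f x) 2 (cubeMeasure d) := by
    rw [Lp.enorm_def]
    exact eLpNorm_congr_ae ((Lp.coeFn_sub g (A f)).trans (hg.sub .rfl))
  rw [henorm]
  exact le_iSup₂ (f := fun (f : V) (_ : (f : (Fin d → ℝ) → ℂ) ∈ FdLog d) =>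
    eLpNorm (fun x => (f : (Fin d → ℝ) → ℂ) x - A f x) 2 (cubeMeasure d)) f hf

theorem sqrt_one_sub_div_card_le_worstCaseError (hV : FdLog d ⊆ V) (hA : A.rank ≤ n)
    {s : Finset (Fin d → ℤ)} (hs : s.Nonempty) (hweight : ∀ k ∈ s, logWeight d k ≤ 1) :
    ENNReal.ofReal √(1 - n / s.card) ≤ worstCaseError A := by
  have : FiniteDimensional ℂ A.range :=
    Module.rank_lt_aleph0_iff.1 (hA.trans_lt Cardinal.natCast_lt_aleph0)
  have hrank : (Module.finrank ℂ A.range : ℝ) ≤ n := mod_cast Module.finrank_le_of_rank_le hA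
  obtain ⟨k, hks, hk⟩ :=
    exists_one_sub_finrank_div_card_le_norm_sub_sq orthonormal_monomialLp hs A.range
  have hF := mFourier_comp_torusMk_mem_FdLog (hweight k hks)
  let f : V := ⟨_, hV hF⟩
  calc ENNReal.ofReal √(1 - n / s.card)
      ≤ ENNReal.ofReal ‖monomialLp k - A f‖ := by
        refine ENNReal.ofReal_le_ofReal (Real.sqrt_le_left (norm_nonneg _) |>.2 ?_)
        exact le_trans (by gcongr) (hk (A f) (A.mem_range_self f))
    _ = ‖monomialLp k - A f‖ₑ := ofReal_norm _
    _ ≤ worstCaseError A := enorm_sub_le_worstCaseError A hF (coeFn_monomialLp k)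

end WorstCaseError

section Frequencies

variable {d : ℕ}

theorem logWeight_le_one_of_norm_le_exp_one {k : Fin d → ℤ} (hk : ‖k‖ ≤ Real.exp 1) :
    logWeight d k ≤ 1 := by
  refine max_le le_rfl ?_
  rcases (norm_nonneg k).eq_or_lt with hzero | hpos
  · simp [← hzero]
  · exact (Real.log_le_iff_le_exp hpos).2 hk

theorem norm_le_of_mem_piFinset_Icc {ι : Type*} [Fintype ι] [DecidableEq ι] {k : ι → ℤ}
    {m : ℕ} (hk : k ∈ Fintype.piFinset fun _ => Finset.Icc (-m : ℤ) m) : ‖k‖ ≤ m := by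
  refine (pi_norm_le_iff_of_nonneg m.cast_nonneg).2 fun i => ?_
  rw [Int.norm_eq_abs]
  exact_mod_cast abs_le.2 (Finset.mem_Icc.1 (Fintype.mem_piFinset.1 hk i))

theorem sqrt_one_sub_div_five_pow_le_worstCaseError {n : ℕ}
    {V : Submodule ℂ ((Fin d → ℝ) → ℂ)} (hV : FdLog d ⊆ V) (A : V →ₗ[ℂ] L2Cube d)
    (hA : A.rank ≤ n) : ENNReal.ofReal √(1 - n / 5 ^ d) ≤ worstCaseError A := by
  let s : Finset (Fin d → ℤ) := Fintype.piFinset fun _ => Finset.Icc (-(2 : ℕ) : ℤ) (2 : ℕ)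
  have hcard : s.card = 5 ^ d := Fintype.card_piFinset_const _ _
  have hweight (k) (hk : k ∈ s) : logWeight d k ≤ 1 :=
    logWeight_le_one_of_norm_le_exp_one <|
      (norm_le_of_mem_piFinset_Icc hk).trans (by norm_num; linarith [Real.exp_one_gt_d9])
  have hs : s.Nonempty := Finset.card_pos.1 (hcard ▸ by positivity)
  simpa [hcard] using sqrt_one_sub_div_card_le_worstCaseError A hV hA hs hweight

theorem one_sub_sq_mul_five_pow_le_linComplexity {ε : ℝ} (hε : 0 ≤ ε) (d : ℕ) :
    ENNReal.ofReal ((1 - ε ^ 2) * 5 ^ d) ≤ (linComplexity ε d : ℝ≥0∞) := by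
  calc ENNReal.ofReal ((1 - ε ^ 2) * 5 ^ d)
      ≤ ((⌈(1 - ε ^ 2) * 5 ^ d⌉₊ : ℕ∞) : ℝ≥0∞) := by
        simpa using ENNReal.ofReal_le_ofReal (Nat.le_ceil ((1 - ε ^ 2) * 5 ^ d))
    _ ≤ linComplexity ε d := ENat.toENNReal_le.2 (le_sInf ?_)
  rintro _ ⟨n, rfl, V, A, hV, hA, herr⟩
  have hsqrt : √(1 - n / 5 ^ d) ≤ ε := (ENNReal.ofReal_le_ofReal_iff hε).1
    ((sqrt_one_sub_div_five_pow_le_worstCaseError hV A hA).trans herr)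
  have hdiv : 1 - ε ^ 2 ≤ n / 5 ^ d := by linarith [(Real.sqrt_le_left hε).1 hsqrt]
  exact Nat.cast_le.2 (Nat.ceil_le.2 ((le_div_iff₀ (by positivity)).1 hdiv))

end Frequencies

theorem curseOfDimensionality_of_le {comp : ℝ → ℕ → ℕ∞} {C b ε : ℝ} (hC : 0 < C) (hb : 1 < b)
    (hε : 0 < ε) (hcomp : ∀ d : ℕ, ENNReal.ofReal (C * b ^ d) ≤ (comp ε d : ℝ≥0∞)) :
    CurseOfDimensionality comp :=
  ⟨C, b - 1, ε, hC, sub_pos.2 hb, hε, by simpa only [add_sub_cancel] using hcomp⟩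

theorem one_div_sqrt_two_le_sqrt_one_sub_div {a b : ℝ} (hb : 0 < b) (hab : a ≤ b / 2) :
    1 / √2 ≤ √(1 - a / b) := by
  have hdiv : a / b ≤ 1 / 2 := (div_le_iff₀ hb).2 (by linarith)
  rw [one_div, ← Real.sqrt_inv]
  exact Real.sqrt_le_sqrt (by linarith)

theorem statement10_general :
    (∀ (ε : ℝ), 0 ≤ ε → ∀ d : ℕ,
      ENNReal.ofReal ((1 - ε ^ 2) * 5 ^ d) ≤ (linComplexity ε d : ℝ≥0∞)) ∧
    ∀ (d n : ℕ) (V : Submodule ℂ ((Fin d → ℝ) → ℂ)), FdLog d ⊆ V →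
      ∀ A : V →ₗ[ℂ] L2Cube d, A.rank ≤ n →
        ENNReal.ofReal √(1 - n / 5 ^ d) ≤ worstCaseError A :=
  ⟨fun _ hε d => one_sub_sq_mul_five_pow_le_linComplexity hε d,
    fun _ _ _ hV A hA => sqrt_one_sub_div_five_pow_le_worstCaseError hV A hA⟩

/-- `L₂`-approximation on `F_d^log` with linear algorithms suffers from the curse of dimensionality;
any linear map of rank at most `n ≤ 5^d/2` into `L₂([0,1]^d)`, defined on any linear space containing
`F_d^log`, has worst-case error at least `1/√2`. -/
theorem statement10 :
    CurseOfDimensionality linComplexity ∧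
    ∀ (d n : ℕ), (n : ℝ) ≤ 5 ^ d / 2 →
      ∀ (V : Submodule ℂ ((Fin d → ℝ) → ℂ)), FdLog d ⊆ V →
        ∀ A : V →ₗ[ℂ] L2Cube d, A.rank ≤ n →
          ENNReal.ofReal (1 / Real.sqrt 2) ≤ worstCaseError A := by
  exact ⟨curseOfDimensionality_of_le (by norm_num) (by norm_num) one_half_pos
      (statement10_general.1 (1 / 2) one_half_pos.le),
    fun d n hn V hV A hA =>
      (ENNReal.ofReal_le_ofReal (one_div_sqrt_two_le_sqrt_one_sub_div (by positivity) hn)).trans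
        (statement10_general.2 d n V hV A hA)⟩
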